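/- Define M : ℕ → ℕ → ℕ recursively by M(0, n) = n - 1 and M(k+1, n) = (n - 1) · (1 + M(k, n - 1)). Then for all natural numbers k and all n ≥ 1, M(k, n) ≤ n^(k+1). That is, the message complexity of the Oral Messaging algorithm OM(f) on N participants is O(N^(f+1)). -/

import Mathlib

/-- Message count of the Oral Messaging algorithm `OM(k)` with `n` participants:
the commander sends to the other `n - 1` participants, each of whom runs
`OM(k-1)` among the remaining `n - 1` participants. -/
def omMessages : ℕ → ℕ → ℕ
  | 0, n => n - 1
  | k + 1, n => (n - 1) * (1 + omMessages k (n - 1))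

/-- The Oral Messaging algorithm `OM(f)` on `N` participants has message
complexity `O(N^(f+1))`: `M(k, n) ≤ n^(k+1)` for all `k` and all `n ≥ 1`. -/
theorem omMessages_le_pow : ∀ (k n : ℕ), 1 ≤ n → omMessages k n ≤ n ^ (k + 1) := by
  intro k
  induction k with
  | zero => intro n _; simp [omMessages]
  | succ k ih =>
    intro n hn
    obtain ⟨m, rfl⟩ : ∃ m, n = m + 1 := ⟨n - 1, by omega⟩
    simp only [omMessages, Nat.add_sub_cancel]
    rcases Nat.eq_zero_or_pos m with h0 | hm
    · subst h0; simp
    · have h1 := ih m hm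
      have h2 : m ^ (k + 1) < (m + 1) ^ (k + 1) :=
        Nat.pow_lt_pow_left (Nat.lt_succ_self m) (Nat.succ_ne_zero k)
      rw [pow_succ (m + 1) (k + 1), mul_comm ((m + 1) ^ (k + 1))]
      exact Nat.mul_le_mul (Nat.le_succ m) (by omega)
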